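/- arXiv:1503.08002 — 2 statements merged into one kernel-verified Lean document; each statement's English description precedes it below -/
import Mathlib

section
/- The graph A'' with vertex set {1,...,7} and edge set E = {(2,5),(3,5),(2,3),(3,6),(4,6),(3,4),(2,7),(4,7),(2,4),(1,2),(1,3),(1,4)} is not word-representable: there is no word w over {1,...,7} in which distinct letters alternate exactly when adjacent in A''. -/
/-!
Write `N x t` for the number of occurrences of the letter `x` among the first `t` letters of `w`.
Two letters alternate exactly when their counts satisfy `N y ≤ N x ≤ N y + 1` for all `t` (the
letter `x` comes first), or the same with `x` and `y` exchanged; this is `alternates_iff`.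

Hence the counts of the letters of a clique are linearly ordered and span at most `1`. For the
clique `{1,2,3,4}` this reads `N p ≥ N q ≥ N r ≥ N s ≥ N p - 1`, so `(p, q, r, s)` is a cyclic
arrangement of the clique. By `alt_of_opposite`, a letter alternating with two opposite members
of this arrangement alternates with a third one as well. The two neighbours of `1` in the
arrangement are opposite, and one of `5`, `6`, `7` is adjacent to exactly these two among
`1,2,3,4`: a contradiction.
-/


/-- Two distinct letters `x` and `y` alternate in the word `w` if, after deleting
all other letters, no two equal letters are adjacent. -/
def alternates {V : Type*} [DecidableEq V] (w : List V) (x y : V) : Prop :=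
  (w.filter (fun z => decide (z = x ∨ z = y))).Chain' (· ≠ ·)

/-- A word `w` over the alphabet `V` represents the graph `G`: every vertex occurs in `w`,
and two distinct letters alternate in `w` iff they are adjacent in `G`. -/
def Represents {V : Type*} [DecidableEq V] (w : List V) (G : SimpleGraph V) : Prop :=
  (∀ v : V, v ∈ w) ∧ ∀ x y : V, x ≠ y → (alternates w x y ↔ G.Adj x y)
/-- The edges of the graph `A''` (vertices `1,…,7` encoded as `Fin 7` via `i ↦ i+1`):
the inner triangle `2,3,4`, the central vertex `1` adjacent to `2,3,4`, and outer
vertices `5` (adjacent to `2,3`), `6` (adjacent to `3,4`), `7` (adjacent to `2,4`). -/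
def AEdges : List (ℕ × ℕ) :=
  [(1,2), (1,3), (1,4), (2,3), (3,4), (2,4), (2,5), (3,5), (3,6), (4,6), (2,7), (4,7)]

/-- The graph `A''` on seven vertices. -/
def Agraph : SimpleGraph (Fin 7) :=
  SimpleGraph.fromRel (fun a b => ((a : ℕ) + 1, (b : ℕ) + 1) ∈ AEdges)

/-- The number of occurrences of `x` among the first `t` letters of `w`, as a function of `t`. -/
def prefixCount {V : Type*} [DecidableEq V] (w : List V) (x : V) (t : ℕ) : ℕ :=
  (w.take t).count x

/-- The counting functions `f`, `g` interleave with `f` leading: `g ≤ f ≤ g + 1` pointwise. -/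
def Lead (f g : ℕ → ℕ) : Prop := ∀ t, g t ≤ f t ∧ f t ≤ g t + 1

/-- One of the counting functions `f`, `g` leads the other; the counterpart of `alternates`. -/
def Alt (f g : ℕ → ℕ) : Prop := Lead f g ∨ Lead g f

/-- Prepending `y` to the restricted word encodes that `x` precedes `y`, and makes the induction
on `w` exchange the roles of `x` and `y` at every occurrence of `x`. -/
lemma isChain_cons_filter_iff {V : Type*} [DecidableEq V] (w : List V) :
    ∀ x y : V, x ≠ y →
      ((y :: w.filter (fun z => decide (z = x ∨ z = y))).IsChain (· ≠ ·) ↔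
        Lead (prefixCount w x) (prefixCount w y)) := by
  induction w with
  | nil => intro x y _; simp [Lead, prefixCount]
  | cons a w ih =>
    intro x y hxy
    -- The empty prefix imposes no condition, so only prefixes containing `a` matter.
    have step : Lead (prefixCount (a :: w) x) (prefixCount (a :: w) y) ↔
        ∀ t, ((a :: w.take t).count y ≤ (a :: w.take t).count x ∧
          (a :: w.take t).count x ≤ (a :: w.take t).count y + 1) := by
      constructor
      · intro h t
        exact h (t + 1)
      · rintro h (_ | t)
        · simp [prefixCount]
        · exact h t
    rw [step]
    by_cases hax : a = x
    · subst hax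
      have h := ih y a hxy.symm
      simp only [or_comm (b := _ = a)] at h
      simp only [List.filter_cons, true_or, decide_true, if_true, List.isChain_cons_cons, h,
        List.count_cons_self, List.count_cons_of_ne hxy, Lead, prefixCount]
      constructor
      · rintro ⟨_, h⟩ t
        have := h t
        omega
      · intro h
        refine ⟨hxy.symm, fun t => ?_⟩
        have := h t
        omega
    · by_cases hay : a = y
      · subst hay
        simp only [List.filter_cons, or_true, decide_true, if_true, List.isChain_cons_cons, ne_eq,
          not_true_eq_false, false_and, false_iff]
        intro h
        have := h 0
        simp [hax] at this
      · have h := ih x y hxy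
        simp only [List.filter_cons, hax, hay, or_self, decide_false, Bool.false_eq_true, if_false,
          h, List.count_cons_of_ne hax, List.count_cons_of_ne hay, Lead, prefixCount]

lemma alternates_iff {V : Type*} [DecidableEq V] (w : List V) {x y : V} (hxy : x ≠ y) :
    alternates w x y ↔ Alt (prefixCount w x) (prefixCount w y) := by
  have h1 := isChain_cons_filter_iff w x y hxy
  have h2 := isChain_cons_filter_iff w y x hxy.symm
  simp only [or_comm (b := _ = x)] at h2
  unfold Alt
  rw [← h1, ← h2]
  change List.IsChain _ _ ↔ _
  have hmem : ∀ z ∈ w.filter (fun z => decide (z = x ∨ z = y)), z = x ∨ z = y := by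
    intro z hz
    simpa using (List.mem_filter.1 hz).2
  generalize w.filter (fun z => decide (z = x ∨ z = y)) = l at hmem
  cases l with
  | nil => simp
  | cons a l =>
    simp only [List.isChain_cons_cons]
    rcases hmem a (by simp) with rfl | rfl
    · simp [hxy.symm]
    · simp [hxy]

/-- In a cyclic arrangement `(p, q, r, s)` of a 4-clique, a function interleaving with two opposite
members interleaves with a third member. -/
lemma alt_of_opposite {p q r s v : ℕ → ℕ} (hpq : Lead p q) (hqr : Lead q r) (hrs : Lead r s)
    (hps : Lead p s) :
    (Alt v p → Alt v r → Alt v q ∨ Alt v s) ∧ (Alt v q → Alt v s → Alt v p ∨ Alt v r) := by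
  have key : ∀ {f g : ℕ → ℕ}, (∀ t, q t ≤ p t → r t ≤ q t → s t ≤ r t → p t ≤ s t + 1 →
      g t ≤ f t ∧ f t ≤ g t + 1) → Lead f g := fun h t =>
    h t (hpq t).1 (hqr t).1 (hrs t).1 (hps t).2
  constructor
  · rintro (h | h) (h' | h')
    · exact .inl (.inl (key fun t => by have := h t; have := h' t; omega))
    · exact .inl (.inl (key fun t => by have := h t; have := h' t; omega))
    · exact .inr (.inl (key fun t => by have := h t; have := h' t; omega))
    · exact .inl (.inr (key fun t => by have := h t; have := h' t; omega))
  · rintro (h | h) (h' | h')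
    · exact .inr (.inl (key fun t => by have := h t; have := h' t; omega))
    · exact .inr (.inl (key fun t => by have := h t; have := h' t; omega))
    · exact .inl (.inr (key fun t => by have := h t; have := h' t; omega))
    · exact .inr (.inr (key fun t => by have := h t; have := h' t; omega))

/-- The obstruction once `x`, `y`, `z` are sorted: `a`, `b`, `c` play the roles of the outer
vertices over the edges `xy`, `yz`, `xz`, and `o` that of the central vertex. -/
lemma no_sorted {o x y z a b c : ℕ → ℕ} (hxy : Lead x y) (hyz : Lead y z) (hxz : Lead x z)
    (hox : Alt o x) (hoy : Alt o y) (hoz : Alt o z)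
    (ha : Alt a x ∧ Alt a y ∧ ¬ Alt a z ∧ ¬ Alt a o)
    (hb : Alt b y ∧ Alt b z ∧ ¬ Alt b x ∧ ¬ Alt b o)
    (hc : Alt c x ∧ Alt c z ∧ ¬ Alt c y ∧ ¬ Alt c o) : False := by
  obtain ⟨ha1, ha2, ha3, ha4⟩ := ha
  obtain ⟨hb1, hb2, hb3, hb4⟩ := hb
  obtain ⟨hc1, hc2, hc3, hc4⟩ := hc
  -- The cases are the four positions of `o` relative to `x ≥ y ≥ z`.
  rcases hoz with hoz | hzo
  · rcases hoy with hoy | hyo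
    · rcases hox with hox | hxo
      · exact ((alt_of_opposite hox hxy hyz hoz).2 hc1 hc2).elim hc4 hc3
      · exact ((alt_of_opposite hxo hoy hyz hxz).1 ha1 ha2).elim ha4 ha3
    · exact ((alt_of_opposite hxy hyo hoz hxz).2 hb1 hb2).elim hb3 hb4
  · have hxo : Lead x o := by
      rcases hox with hox | hxo
      · intro t
        have := hox t
        have := hzo t
        have := hxz t
        omega
      · exact hxo
    exact ((alt_of_opposite hxy hyz hzo hxo).1 hc1 hc2).elim hc3 hc4

/-- The graph `A''` is not word-representable. -/
theorem stmt_5 : ¬ ∃ w : List (Fin 7), Represents w Agraph := by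
  rintro ⟨w, -, hw⟩
  have adj : ∀ x y : Fin 7, x ≠ y →
      (Alt (prefixCount w x) (prefixCount w y) ↔
        (((x : ℕ) + 1, (y : ℕ) + 1) ∈ AEdges ∨ ((y : ℕ) + 1, (x : ℕ) + 1) ∈ AEdges)) := by
    intro x y hxy
    rw [← alternates_iff w hxy, hw x y hxy, Agraph, SimpleGraph.fromRel_adj]
    simp [hxy]
  have yes : ∀ x y : Fin 7, x ≠ y ∧ (((x : ℕ) + 1, (y : ℕ) + 1) ∈ AEdges ∨
      ((y : ℕ) + 1, (x : ℕ) + 1) ∈ AEdges) → Alt (prefixCount w x) (prefixCount w y) :=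
    fun x y h => (adj x y h.1).2 h.2
  have no : ∀ x y : Fin 7, x ≠ y ∧ ¬ (((x : ℕ) + 1, (y : ℕ) + 1) ∈ AEdges ∨
      ((y : ℕ) + 1, (x : ℕ) + 1) ∈ AEdges) → ¬ Alt (prefixCount w x) (prefixCount w y) :=
    fun x y h h' => h.2 ((adj x y h.1).1 h')
  have o1 := yes 0 1 (by decide)
  have o2 := yes 0 2 (by decide)
  have o3 := yes 0 3 (by decide)
  have h4 : Alt _ _ ∧ Alt _ _ ∧ ¬ Alt _ _ ∧ ¬ Alt _ _ :=
    ⟨yes 4 1 (by decide), yes 4 2 (by decide), no 4 3 (by decide), no 4 0 (by decide)⟩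
  have h5 : Alt _ _ ∧ Alt _ _ ∧ ¬ Alt _ _ ∧ ¬ Alt _ _ :=
    ⟨yes 5 2 (by decide), yes 5 3 (by decide), no 5 1 (by decide), no 5 0 (by decide)⟩
  have h6 : Alt _ _ ∧ Alt _ _ ∧ ¬ Alt _ _ ∧ ¬ Alt _ _ :=
    ⟨yes 6 1 (by decide), yes 6 3 (by decide), no 6 2 (by decide), no 6 0 (by decide)⟩
  have swap : ∀ {A B C : Prop}, A ∧ B ∧ C → B ∧ A ∧ C := fun h => ⟨h.2.1, h.1, h.2.2⟩
  -- A cyclic choice of leaders forces the three counts to coincide, so transitivity of `Lead`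
  -- within the triangle lets every case be sorted.
  have trans : ∀ {f g h : ℕ → ℕ}, Lead f g → Lead g h → Alt f h → Lead f h := by
    rintro f g h hfg hgh (hfh | hhf)
    · exact hfh
    · intro t
      have := hfg t
      have := hgh t
      have := hhf t
      omega
  rcases yes 1 2 (by decide) with h12 | h21
  · rcases yes 2 3 (by decide) with h23 | h32
    · exact no_sorted h12 h23 (trans h12 h23 (yes 1 3 (by decide))) o1 o2 o3 h4 h5 h6
    · rcases yes 1 3 (by decide) with h13 | h31
      · exact no_sorted h13 h32 h12 o1 o3 o2 h6 (swap h5) h4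
      · exact no_sorted h31 h12 h32 o3 o1 o2 (swap h6) h4 (swap h5)
  · rcases yes 1 3 (by decide) with h13 | h31
    · exact no_sorted h21 h13 (trans h21 h13 (yes 2 3 (by decide))) o2 o1 o3 (swap h4) h6 h5
    · rcases yes 2 3 (by decide) with h23 | h32
      · exact no_sorted h23 h31 h21 o2 o3 o1 h5 (swap h6) (swap h4)
      · exact no_sorted h32 h21 h31 o3 o2 o1 (swap h5) (swap h4) (swap h6)
end

section
/- If a graph G contains an induced subgraph isomorphic to the graph A'' (the non-word-representable subdivided triangular configuration on 7 vertices), then G is not word-representable. -/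
section Words

variable {V : Type*} [DecidableEq V]

/-- In every prefix of `w`, the letter `x` occurs as often as `y` or once more. For `x ≠ y` this
says that `x` and `y` alternate in `w` and that `y` is not the first of them to occur. -/
def Leads (w : List V) (x y : V) : Prop :=
  ∀ n, (w.take n).count y ≤ (w.take n).count x ∧ (w.take n).count x ≤ (w.take n).count y + 1

lemma alternates_iff_s12 (w : List V) (x y : V) :
    alternates w x y ↔ (w.filter (fun z => decide (z = x ∨ z = y))).IsChain (· ≠ ·) := Iff.rfl

lemma alternates_comm (w : List V) (x y : V) : alternates w x y ↔ alternates w y x := by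
  unfold alternates
  simp only [or_comm]

/-- Removing a leading `x` exchanges the roles of the two letters, which drives the induction. -/
lemma leads_iff (w : List V) : ∀ x y : V, x ≠ y →
    (Leads w x y ↔
      alternates w x y ∧ (w.filter (fun z => decide (z = x ∨ z = y))).head? ≠ some y) := by
  induction w with
  | nil => intro x y _; simp [Leads, alternates_iff_s12]
  | cons z t ih =>
    intro x y hxy
    have split : Leads (z :: t) x y ↔ ∀ n,
        ((z :: t.take n).count y ≤ (z :: t.take n).count x ∧
          (z :: t.take n).count x ≤ (z :: t.take n).count y + 1) := by
      constructor
      · intro h n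
        simpa using h (n + 1)
      · intro h n
        cases n with
        | zero => simp
        | succ n => simpa using h n
    rw [split]
    by_cases hx : z = x
    · subst hx
      have h := ih y z hxy.symm
      rw [alternates_comm] at h
      simp only [or_comm (a := _ = y)] at h
      have hl : (∀ n, ((z :: t.take n).count y ≤ (z :: t.take n).count z ∧
          (z :: t.take n).count z ≤ (z :: t.take n).count y + 1)) ↔ Leads t y z := by
        refine forall_congr' fun n => ?_
        rw [List.count_cons_self, List.count_cons_of_ne hxy]
        omega
      rw [hl, h]
      rw [alternates_iff_s12, alternates_iff_s12]
      simp only [List.filter_cons, true_or, decide_true, if_true, List.head?_cons, ne_eq,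
        Option.some.injEq, hxy, not_false_eq_true, and_true]
      cases t.filter (fun a => decide (a = z ∨ a = y)) with
      | nil => simp
      | cons a s => simp [List.isChain_cons_cons, and_comm, eq_comm]
    · by_cases hy : z = y
      · subst hy
        simp only [List.filter_cons, or_true, decide_true, if_true, List.head?_cons, ne_eq,
          not_true_eq_false, and_false, iff_false]
        intro h
        have := h 0
        simp [hxy.symm] at this
      · have h := ih x y hxy
        unfold alternates at h ⊢
        simp only [List.filter_cons, hx, hy, or_self, decide_false, Bool.false_eq_true, if_false]
        rw [← h]
        refine forall_congr' fun n => ?_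
        rw [List.count_cons_of_ne hx, List.count_cons_of_ne hy]

lemma head_ne_of_idxOf_lt (w : List V) (x y : V) (h : w.idxOf x < w.idxOf y) :
    (w.filter (fun z => decide (z = x ∨ z = y))).head? ≠ some y := by
  induction w with
  | nil => simp
  | cons z t ih =>
    by_cases hy : z = y
    · subst hy; simp at h
    · by_cases hx : z = x
      · subst hx
        simpa [List.filter_cons] using hy
      · rw [List.idxOf_cons_ne _ hx, List.idxOf_cons_ne _ hy] at h
        simpa [List.filter_cons, hx, hy] using ih (by omega)

/-- The orientation by first occurrence has no shortcut of length three. -/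
lemma no_shortcut {G : SimpleGraph V} {w : List V} (hw : Represents w G) {a b c d : V}
    (hab : w.idxOf a < w.idxOf b) (hbc : w.idxOf b < w.idxOf c) (hcd : w.idxOf c < w.idxOf d)
    (ab : G.Adj a b) (bc : G.Adj b c) (cd : G.Adj c d) (ad : G.Adj a d) :
    G.Adj a c ∧ G.Adj b d := by
  have toLeads : ∀ {x y : V}, w.idxOf x < w.idxOf y → G.Adj x y → Leads w x y :=
    fun {x y} hlt hadj => (leads_iff w x y hadj.ne).2
      ⟨(hw.2 x y hadj.ne).2 hadj, head_ne_of_idxOf_lt w x y hlt⟩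
  have toAdj : ∀ {x y : V}, w.idxOf x < w.idxOf y → Leads w x y → G.Adj x y := by
    intro x y hlt hl
    have hne : x ≠ y := by rintro rfl; omega
    exact (hw.2 x y hne).1 ((leads_iff w x y hne).1 hl).1
  have h1 := toLeads hab ab
  have h2 := toLeads hbc bc
  have h3 := toLeads hcd cd
  have h4 := toLeads (by omega) ad
  refine ⟨toAdj (by omega) fun n => ?_, toAdj (by omega) fun n => ?_⟩ <;>
  · have := h1 n
    have := h2 n
    have := h3 n
    have := h4 n
    omega

/-- The position of `u` relative to `x₁` and `x₃` is either before both, after both or between them;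
the shortcuts used are `u x₁ x₂ x₃`, `x₁ x₂ x₃ u` and `x₀ x₁ u x₃`. -/
lemma not_adj_one_three {G : SimpleGraph V} {w : List V} (hw : Represents w G)
    {x₀ x₁ x₂ x₃ u : V}
    (h01 : w.idxOf x₀ < w.idxOf x₁) (h12 : w.idxOf x₁ < w.idxOf x₂)
    (h23 : w.idxOf x₂ < w.idxOf x₃)
    (a01 : G.Adj x₀ x₁) (a03 : G.Adj x₀ x₃) (a12 : G.Adj x₁ x₂) (a23 : G.Adj x₂ x₃)
    (u1 : G.Adj u x₁) (u3 : G.Adj u x₃) (u0 : ¬ G.Adj u x₀) (u2 : ¬ G.Adj u x₂) : False := by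
  have n1 : w.idxOf u ≠ w.idxOf x₁ := fun h => u1.ne ((List.idxOf_inj (hw.1 u)).1 h)
  have n3 : w.idxOf u ≠ w.idxOf x₃ := fun h => u3.ne ((List.idxOf_inj (hw.1 u)).1 h)
  rcases lt_or_gt_of_ne n1 with l1 | l1
  · exact u2 (no_shortcut hw l1 h12 h23 u1 a12 a23 u3).1
  · rcases lt_or_gt_of_ne n3 with l3 | l3
    · exact u0 (no_shortcut hw h01 l1 l3 a01 u1.symm u3 a03).1.symm
    · exact u2 (no_shortcut hw h12 h23 l3 a12 a23 u3.symm u1.symm).2.symm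

/-- The mirror image of `not_adj_one_three`, with the shortcuts `u x₀ x₁ x₂`, `x₀ x₁ x₂ u` and
`x₀ u x₂ x₃`. -/
lemma not_adj_zero_two {G : SimpleGraph V} {w : List V} (hw : Represents w G)
    {x₀ x₁ x₂ x₃ u : V}
    (h01 : w.idxOf x₀ < w.idxOf x₁) (h12 : w.idxOf x₁ < w.idxOf x₂)
    (h23 : w.idxOf x₂ < w.idxOf x₃)
    (a01 : G.Adj x₀ x₁) (a03 : G.Adj x₀ x₃) (a12 : G.Adj x₁ x₂) (a23 : G.Adj x₂ x₃)
    (u0 : G.Adj u x₀) (u2 : G.Adj u x₂) (u1 : ¬ G.Adj u x₁) (u3 : ¬ G.Adj u x₃) : False := by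
  have n0 : w.idxOf u ≠ w.idxOf x₀ := fun h => u0.ne ((List.idxOf_inj (hw.1 u)).1 h)
  have n2 : w.idxOf u ≠ w.idxOf x₂ := fun h => u2.ne ((List.idxOf_inj (hw.1 u)).1 h)
  rcases lt_or_gt_of_ne n0 with l0 | l0
  · exact u1 (no_shortcut hw l0 h01 h12 u0 a01 a12 u2).1
  · rcases lt_or_gt_of_ne n2 with l2 | l2
    · exact u3 (no_shortcut hw l0 l2 h23 u0.symm u2 a23 a03).2
    · exact u1 (no_shortcut hw h01 h12 l2 a01 a12 u2.symm u0.symm).2.symm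

/-- `A''` with centre `z`, inner triangle `a, b, c` and outer vertices `p`, `q`, `r` attached to
`ab`, `bc`, `ac`, in the case where `a, b, c` first occur in this order. -/
lemma false_of_sorted {G : SimpleGraph V} {w : List V} (hw : Represents w G)
    {z a b c p q r : V} (hab : w.idxOf a < w.idxOf b) (hbc : w.idxOf b < w.idxOf c)
    (za : G.Adj z a) (zb : G.Adj z b) (zc : G.Adj z c)
    (ab : G.Adj a b) (bc : G.Adj b c) (ac : G.Adj a c)
    (pa : G.Adj p a) (pb : G.Adj p b) (pc : ¬ G.Adj p c) (pz : ¬ G.Adj p z)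
    (qb : G.Adj q b) (qc : G.Adj q c) (qa : ¬ G.Adj q a) (qz : ¬ G.Adj q z)
    (ra : G.Adj r a) (rc : G.Adj r c) (rb : ¬ G.Adj r b) (rz : ¬ G.Adj r z) : False := by
  have na : w.idxOf z ≠ w.idxOf a := fun h => za.ne ((List.idxOf_inj (hw.1 z)).1 h)
  have nb : w.idxOf z ≠ w.idxOf b := fun h => zb.ne ((List.idxOf_inj (hw.1 z)).1 h)
  have nc : w.idxOf z ≠ w.idxOf c := fun h => zc.ne ((List.idxOf_inj (hw.1 z)).1 h)
  rcases lt_or_gt_of_ne nb with lb | lb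
  · rcases lt_or_gt_of_ne na with la | la
    · exact not_adj_one_three hw la hab hbc za zc ab bc ra rc rz rb
    · exact not_adj_zero_two hw la lb hbc za.symm ac zb bc pa pb pz pc
  · rcases lt_or_gt_of_ne nc with lc | lc
    · exact not_adj_one_three hw hab lb lc ab ac zb.symm zc qb qc qa qz
    · exact not_adj_zero_two hw hab hbc lc ab za.symm bc zc.symm ra rc rb rz

end Words

/-- If a graph `G` contains an induced subgraph isomorphic to `A''`, then `G` is not
word-representable. -/
theorem stmt_12 {V : Type*} [DecidableEq V] (G : SimpleGraph V) (f : Fin 7 → V)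
    (hinj : Function.Injective f)
    (hind : ∀ a b : Fin 7, Agraph.Adj a b ↔ G.Adj (f a) (f b)) :
    ¬ ∃ w : List V, Represents w G := by
  rintro ⟨w, hw⟩
  have hne : ∀ i j : Fin 7, i ≠ j → w.idxOf (f i) ≠ w.idxOf (f j) :=
    fun i j hij h => hij (hinj ((List.idxOf_inj (hw.1 _)).1 h))
  -- `p`, `q`, `r` are the outer vertices attached to `ab`, `bc`, `ac`.
  have main : ∀ a b c p q r : Fin 7,
      w.idxOf (f a) < w.idxOf (f b) → w.idxOf (f b) < w.idxOf (f c) →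
      (Agraph.Adj 0 a ∧ Agraph.Adj 0 b ∧ Agraph.Adj 0 c ∧
        Agraph.Adj a b ∧ Agraph.Adj b c ∧ Agraph.Adj a c) →
      (Agraph.Adj p a ∧ Agraph.Adj p b ∧ ¬ Agraph.Adj p c ∧ ¬ Agraph.Adj p 0) →
      (Agraph.Adj q b ∧ Agraph.Adj q c ∧ ¬ Agraph.Adj q a ∧ ¬ Agraph.Adj q 0) →
      (Agraph.Adj r a ∧ Agraph.Adj r c ∧ ¬ Agraph.Adj r b ∧ ¬ Agraph.Adj r 0) → False := by
    intro a b c p q r hab hbc hK hp hq hr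
    simp only [hind] at hK hp hq hr
    obtain ⟨za, zb, zc, ab, bc, ac⟩ := hK
    obtain ⟨pa, pb, pc, pz⟩ := hp
    obtain ⟨qb, qc, qa, qz⟩ := hq
    obtain ⟨ra, rc, rb, rz⟩ := hr
    exact false_of_sorted hw hab hbc za zb zc ab bc ac pa pb pc pz qb qc qa qz ra rc rb rz
  have n12 := hne 1 2 (by decide)
  have n13 := hne 1 3 (by decide)
  have n23 := hne 2 3 (by decide)
  rcases lt_or_gt_of_ne n12 with h12 | h12 <;> rcases lt_or_gt_of_ne n13 with h13 | h13 <;>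
    rcases lt_or_gt_of_ne n23 with h23 | h23
  · refine main 1 2 3 4 5 6 h12 h23 ?_ ?_ ?_ ?_ <;> simp [Agraph, AEdges]
  · refine main 1 3 2 6 5 4 h13 h23 ?_ ?_ ?_ ?_ <;> simp [Agraph, AEdges]
  · omega
  · refine main 3 1 2 6 4 5 h13 h12 ?_ ?_ ?_ ?_ <;> simp [Agraph, AEdges]
  · refine main 2 1 3 4 6 5 h12 h13 ?_ ?_ ?_ ?_ <;> simp [Agraph, AEdges]
  · omega
  · refine main 2 3 1 5 6 4 h23 h13 ?_ ?_ ?_ ?_ <;> simp [Agraph, AEdges]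
  · refine main 3 2 1 5 4 6 h23 h12 ?_ ?_ ?_ ?_ <;> simp [Agraph, AEdges]
end
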